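/- Let n ≥ 3 be odd and let G = C_{2n}(2, n) be the circulant graph on the vertex set ℤ/2nℤ in which distinct vertices i and j are adjacent exactly when i − j ≡ ±2 (mod 2n) or i − j ≡ n (mod 2n). Then G is levelable if and only if n ∈ {3, 5}. -/

import Mathlib

/-!
The graph is the prism over an `n`-cycle. Since it is vertex-transitive, a levelling weight can be
averaged over all translations, so levelability is equivalent to all maximal independent sets having
the same cardinality (`card_mul_sum_of_levelling` gives the nontrivial direction).

For `n = 3` and `n = 5` every maximal independent set has `n - 1` vertices, which is a finite check.

For `n ≥ 7` there are maximal independent sets with `n - 1` and with `n - 3` vertices. As `n` is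
odd, `n + 2` is a unit modulo `2n`, and `n = (n + 2) * n`, `2 = (n + 2) * (n + 1)`. In the
coordinate `t` given by `x = (n + 2) * t`, adjacency of `t` and `s` thus means that `t - s` is
`n - 1`, `n` or `n + 1` modulo `2n`. In this coordinate the two sets are `{0, …, n - 2}` and
`{0, 4, 5, …, n - 2, n + 2}`. Writing `T`, `B` or `0` for a column of the prism (a pair
`{x, x + n}`) whose even, odd or neither vertex is chosen, they are the cyclic words `T B T B ⋯ T B 0`
and `T 0 B 0 T B ⋯ T B 0`.
-/

open Finset

/-- A finite set of vertices is independent if no two of its vertices are adjacent. -/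
def SimpleGraph.IsIndepFinset {V : Type*} (G : SimpleGraph V) (W : Finset V) : Prop :=
  ∀ u ∈ W, ∀ v ∈ W, ¬ G.Adj u v

/-- A finite set of vertices is a maximal independent set if it is independent and is not
properly contained in any other independent set. -/
def SimpleGraph.IsMaxIndepFinset {V : Type*} (G : SimpleGraph V) (W : Finset V) : Prop :=
  G.IsIndepFinset W ∧ ∀ U : Finset V, G.IsIndepFinset U → W ⊆ U → U = W

/-- A graph is levelable if there is a weight function on the vertices, taking positive
integer values, such that all maximal independent sets have the same total weight. -/
def SimpleGraph.Levelable {V : Type*} (G : SimpleGraph V) : Prop :=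
  ∃ (c : V → ℕ) (k : ℕ), (∀ v, 1 ≤ c v) ∧
    ∀ W : Finset V, G.IsMaxIndepFinset W → ∑ v ∈ W, c v = k

/-- Maximality of an independent set amounts to every outside vertex having a neighbour inside. -/
lemma isMaxIndepFinset_iff {V : Type*} (G : SimpleGraph V) (W : Finset V) :
    G.IsMaxIndepFinset W ↔ G.IsIndepFinset W ∧ ∀ x ∉ W, ∃ w ∈ W, G.Adj x w := by
  classical
  constructor
  · rintro ⟨h1, h2⟩
    refine ⟨h1, fun x hx => ?_⟩
    by_contra! hno
    have := h2 (insert x W) (by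
      intro u hu' v hv'
      rcases mem_insert.1 hu' with rfl | hu <;> rcases mem_insert.1 hv' with rfl | hv
      · exact G.loopless.irrefl _
      · exact hno v hv
      · exact fun h => hno u hu h.symm
      · exact h1 u hu v hv) (subset_insert _ _)
    exact hx (this ▸ mem_insert_self x W)
  · rintro ⟨h1, h2⟩
    refine ⟨h1, fun U hU hWU => (Subset.antisymm hWU fun x hx => ?_).symm⟩
    by_contra hxW
    obtain ⟨w, hw, hadj⟩ := h2 x hxW
    exact hU x hx w (hWU hw) hadj

/-- Averaging a levelling weight over translations: the total weight of a circulant graph is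
distributed over its maximal independent sets in proportion to their cardinality. -/
lemma card_mul_sum_of_levelling {A : Type*} [AddCommGroup A] [Fintype A] (s : Set A)
    (c : A → ℕ) (k : ℕ)
    (hk : ∀ W : Finset A, (SimpleGraph.circulantGraph s).IsMaxIndepFinset W → ∑ v ∈ W, c v = k)
    (W : Finset A) (hW : (SimpleGraph.circulantGraph s).IsMaxIndepFinset W) :
    W.card * ∑ v, c v = Fintype.card A * k := by
  have hshift (a : A) : ∑ w ∈ W, c (w + a) = k := by
    rw [← hk (W.map (Equiv.addRight a).toEmbedding), sum_map]
    · rfl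
    rw [isMaxIndepFinset_iff] at hW ⊢
    refine ⟨?_, fun x hx => ?_⟩
    · intro u' hu' v' hv'
      obtain ⟨u, hu, rfl⟩ := mem_map.1 hu'
      obtain ⟨v, hv, rfl⟩ := mem_map.1 hv'
      simpa using hW.1 u hu v hv
    · obtain ⟨w, hw, hadj⟩ := hW.2 (x - a) fun h => hx (mem_map.2 ⟨x - a, h, by simp⟩)
      refine ⟨w + a, mem_map.2 ⟨w, hw, rfl⟩, ?_⟩
      rwa [← SimpleGraph.circulantGraph_adj_translate (d := a), sub_add_cancel] at hadj
  calc W.card * ∑ v, c v = ∑ w ∈ W, ∑ a, c (w + a) := by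
        rw [← smul_eq_mul, ← sum_const]
        exact sum_congr rfl fun w _ => (Equiv.sum_comp (Equiv.addLeft w) c).symm
    _ = Fintype.card A * k := by
        rw [sum_comm]
        simp [hshift]

lemma natCast_eq_natCast_of_lt {m a b : ℕ} (ha : a < m) (hb : b < 2 * m) :
    (a : ZMod m) = b ↔ a = b ∨ a + m = b := by
  rw [ZMod.natCast_eq_natCast_iff', Nat.mod_eq_of_lt ha]
  rcases lt_or_ge b m with h | h
  · rw [Nat.mod_eq_of_lt h]
    omega
  · rw [Nat.mod_eq_sub_mod h, Nat.mod_eq_of_lt (by omega)]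
    omega

lemma isUnit_add_two {n : ℕ} (hodd : Odd n) : IsUnit ((n + 2 : ℕ) : ZMod (2 * n)) := by
  rw [ZMod.isUnit_iff_coprime, Nat.coprime_mul_iff_right]
  refine ⟨Nat.coprime_two_right.2 (hodd.add_even even_two), ?_⟩
  simpa using (Nat.coprime_two_left.2 hodd)

lemma add_two_mul_self {n : ℕ} (hodd : Odd n) :
    ((n + 2 : ℕ) : ZMod (2 * n)) * n = n := by
  obtain ⟨m, rfl⟩ := hodd
  have h : ((2 * (2 * m + 1) : ℕ) : ZMod (2 * (2 * m + 1))) = 0 := ZMod.natCast_self _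
  push_cast at h ⊢
  linear_combination (m + 1 : ZMod (2 * (2 * m + 1))) * h

lemma add_two_mul_succ {n : ℕ} (hodd : Odd n) :
    ((n + 2 : ℕ) : ZMod (2 * n)) * (n + 1 : ℕ) = 2 := by
  have h : ((2 * n : ℕ) : ZMod (2 * n)) = 0 := ZMod.natCast_self _
  have h1 := add_two_mul_self hodd
  push_cast at h h1 ⊢
  linear_combination h1 + h

/-- Adjacency in the coordinate `t ↦ (n + 2) * t`: two residues are adjacent when they differ by
`n - 1`, `n` or `n + 1`. -/
lemma adj_iff {n : ℕ} (hn : 3 ≤ n) (hodd : Odd n) {t s : ℕ} (ht : t < 2 * n) (hs : s < 2 * n) :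
    (SimpleGraph.circulantGraph ({2, (n : ZMod (2 * n))} : Set (ZMod (2 * n)))).Adj
      ((n + 2 : ℕ) * (t : ZMod (2 * n))) ((n + 2 : ℕ) * (s : ZMod (2 * n))) ↔
      (t = s + n ∨ s = t + n) ∨ (t + 1 = s + n ∨ s + 1 = t + n) ∨
        (t = s + n + 1 ∨ s = t + n + 1) := by
  have hu := isUnit_add_two hodd
  have key (a b d : ℕ) : ((n + 2 : ℕ) * (a : ZMod (2 * n))) - ((n + 2 : ℕ) * (b : ZMod (2 * n)))
      = (n + 2 : ℕ) * (d : ZMod (2 * n)) ↔ (a : ZMod (2 * n)) = (b + d : ℕ) := by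
    rw [← mul_sub, hu.mul_right_inj, sub_eq_iff_eq_add']
    push_cast
    rfl
  rw [SimpleGraph.circulantGraph_adj]
  simp only [Set.mem_insert_iff, Set.mem_singleton_iff, hu.mul_right_inj]
  have hkey2 (a b : ℕ) := add_two_mul_succ hodd ▸ key a b (n + 1)
  have hkey1 (a b : ℕ) := (add_two_mul_self hodd) ▸ key a b n
  simp only [hkey1, hkey2]
  rw [natCast_eq_natCast_of_lt ht (by omega), natCast_eq_natCast_of_lt ht (by omega),
    natCast_eq_natCast_of_lt ht (by omega), natCast_eq_natCast_of_lt hs (by omega),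
    natCast_eq_natCast_of_lt hs (by omega)]
  omega

/-- A set of residues that is independent and dominating in the coordinate `t ↦ (n + 2) * t` gives
a maximal independent set of the same cardinality. -/
lemma exists_isMaxIndepFinset {n : ℕ} (hn : 3 ≤ n) (hodd : Odd n) (A : Finset ℕ)
    (hA : ∀ t ∈ A, t < 2 * n)
    (hind : ∀ t ∈ A, ∀ s ∈ A, t ≠ s + n ∧ t + 1 ≠ s + n ∧ t ≠ s + n + 1)
    (hdom : ∀ t < 2 * n, t ∉ A → ∃ s ∈ A, (t = s + n ∨ s = t + n) ∨
      (t + 1 = s + n ∨ s + 1 = t + n) ∨ (t = s + n + 1 ∨ s = t + n + 1)) :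
    ∃ W : Finset (ZMod (2 * n)), (SimpleGraph.circulantGraph
      ({2, (n : ZMod (2 * n))} : Set (ZMod (2 * n)))).IsMaxIndepFinset W ∧ W.card = A.card := by
  have hu := isUnit_add_two hodd
  have : NeZero (2 * n) := ⟨by omega⟩
  refine ⟨A.image fun t : ℕ => ((n + 2 : ℕ) * (t : ZMod (2 * n))), ?_, ?_⟩
  · rw [isMaxIndepFinset_iff]
    refine ⟨?_, fun x hx => ?_⟩
    · intro u hu' v hv'
      obtain ⟨t, ht, rfl⟩ := mem_image.1 hu'
      obtain ⟨s, hs, rfl⟩ := mem_image.1 hv'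
      rw [adj_iff hn hodd (hA t ht) (hA s hs)]
      have h1 := hind t ht s hs
      have h2 := hind s hs t ht
      omega
    · obtain ⟨y, hy⟩ := hu.dvd (a := x)
      obtain ⟨t, ht, rfl⟩ : ∃ t < 2 * n, ((t : ℕ) : ZMod (2 * n)) = y :=
        ⟨y.val, y.val_lt, by simp⟩
      subst hy
      obtain ⟨s, hs, hst⟩ := hdom t ht fun h => hx (mem_image_of_mem _ h)
      exact ⟨_, mem_image_of_mem _ hs, (adj_iff hn hodd ht (hA s hs)).2 hst⟩
  · refine card_image_of_injOn fun t ht s hs h => ?_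
    have := (natCast_eq_natCast_of_lt (hA t ht) (by have := hA s hs; omega)).1
      (hu.mul_right_inj.1 h)
    have := hA s hs
    omega

/-- The word `T B T B ⋯ T B 0` around the prism: only one column is empty. -/
lemma exists_isMaxIndepFinset_large {n : ℕ} (hn : 3 ≤ n) (hodd : Odd n) :
    ∃ W : Finset (ZMod (2 * n)), (SimpleGraph.circulantGraph
      ({2, (n : ZMod (2 * n))} : Set (ZMod (2 * n)))).IsMaxIndepFinset W ∧ W.card = n - 1 := by
  obtain ⟨W, hW, hcard⟩ := exists_isMaxIndepFinset hn hodd (range (n - 1))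
    (by simp only [mem_range]; omega) (by simp only [mem_range]; omega) (by
      simp only [mem_range]
      intro t ht htA
      rcases eq_or_ne t (n - 1) with h | h
      · exact ⟨0, by omega, by omega⟩
      rcases eq_or_ne t (2 * n - 1) with h | h
      · exact ⟨n - 2, by omega, by omega⟩
      · exact ⟨t - n, by omega, by omega⟩)
  exact ⟨W, hW, by rw [hcard, card_range]⟩

/-- The word `T 0 B 0 T B ⋯ T B 0` around the prism: three columns are empty. -/
lemma exists_isMaxIndepFinset_small {n : ℕ} (hn : 7 ≤ n) (hodd : Odd n) :
    ∃ W : Finset (ZMod (2 * n)), (SimpleGraph.circulantGraph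
      ({2, (n : ZMod (2 * n))} : Set (ZMod (2 * n)))).IsMaxIndepFinset W ∧ W.card = n - 3 := by
  obtain ⟨W, hW, hcard⟩ := exists_isMaxIndepFinset (by omega) hodd
    (insert 0 (insert (n + 2) (Icc 4 (n - 2))))
    (by simp only [mem_insert, mem_Icc]; omega) (by simp only [mem_insert, mem_Icc]; omega) (by
      simp only [mem_insert, mem_Icc]
      intro t ht htA
      by_cases h0 : n - 1 ≤ t ∧ t ≤ n + 1
      · exact ⟨0, by omega, by omega⟩
      by_cases h1 : t ≤ 3
      · exact ⟨n + 2, by omega, by omega⟩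
      rcases eq_or_ne t (n + 3) with h | h
      · exact ⟨4, by omega, by omega⟩
      rcases eq_or_ne t (2 * n - 1) with h | h
      · exact ⟨n - 2, by omega, by omega⟩
      · exact ⟨t - n, by omega, by omega⟩)
  refine ⟨W, hW, ?_⟩
  rw [hcard, card_insert_of_notMem (by simp), card_insert_of_notMem (by simp; omega), Nat.card_Icc]
  omega

/-- Here the two hypotheses spell out, for `n = 3`, that `W` is independent and dominating. -/
lemma card_eq_of_dominating_three : ∀ W : Finset (ZMod 6),
    (∀ u ∈ W, ∀ v ∈ W, ¬ (u ≠ v ∧ ((u - v = 2 ∨ u - v = 3) ∨ (v - u = 2 ∨ v - u = 3)))) →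
    (∀ x ∉ W, ∃ w ∈ W, x ≠ w ∧ ((x - w = 2 ∨ x - w = 3) ∨ (w - x = 2 ∨ w - x = 3))) →
    W.card = 2 := by
  decide +kernel

/-- Here the two hypotheses spell out, for `n = 5`, that `W` is independent and dominating. -/
lemma card_eq_of_dominating_five : ∀ W : Finset (ZMod 10),
    (∀ u ∈ W, ∀ v ∈ W, ¬ (u ≠ v ∧ ((u - v = 2 ∨ u - v = 5) ∨ (v - u = 2 ∨ v - u = 5)))) →
    (∀ x ∉ W, ∃ w ∈ W, x ≠ w ∧ ((x - w = 2 ∨ x - w = 5) ∨ (w - x = 2 ∨ w - x = 5))) →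
    W.card = 4 := by
  decide +kernel

theorem cubicCirculant_two_levelable_iff (n : ℕ) (hn : 3 ≤ n) (hodd : Odd n) :
    (SimpleGraph.circulantGraph ({2, (n : ZMod (2 * n))} : Set (ZMod (2 * n)))).Levelable ↔
      n ∈ ({3, 5} : Set ℕ) := by
  constructor
  · rintro ⟨c, k, hc, hk⟩
    by_contra hnot
    have h7 : 7 ≤ n := by
      obtain ⟨m, rfl⟩ := hodd
      simp only [Set.mem_insert_iff, Set.mem_singleton_iff] at hnot
      omega
    have : NeZero (2 * n) := ⟨by omega⟩
    obtain ⟨W₁, hW₁, hcard₁⟩ := exists_isMaxIndepFinset_large hn hodd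
    obtain ⟨W₂, hW₂, hcard₂⟩ := exists_isMaxIndepFinset_small h7 hodd
    have hpos : 0 < ∑ v, c v := sum_pos (fun v _ => hc v) univ_nonempty
    have heq := Nat.eq_of_mul_eq_mul_right hpos
      ((card_mul_sum_of_levelling _ c k hk W₁ hW₁).trans
        (card_mul_sum_of_levelling _ c k hk W₂ hW₂).symm)
    omega
  · rintro (rfl | rfl)
    · refine ⟨fun _ => 1, 2, fun _ => le_rfl, fun W hW => ?_⟩
      obtain ⟨h1, h2⟩ := (isMaxIndepFinset_iff _ _).1 hW
      rw [← card_eq_sum_ones]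
      exact card_eq_of_dominating_three W h1 h2
    · refine ⟨fun _ => 1, 4, fun _ => le_rfl, fun W hW => ?_⟩
      obtain ⟨h1, h2⟩ := (isMaxIndepFinset_iff _ _).1 hW
      rw [← card_eq_sum_ones]
      exact card_eq_of_dominating_five W h1 h2
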